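/- Let ψ be entire, φ(z) = az + b with 0 < |a| < 1 and a not a positive real number, ψ(b/(1-a)) ≠ 0, and suppose C_{ψ,φ} is compact on F². Then 0 ∈ W(C_{ψ,φ}) and W(C_{ψ,φ}) is closed. -/

import Mathlib

open MeasureTheory Complex

/-- The Gaussian measure `π⁻¹ e^{-|z|²} dA(z)` on `ℂ`. -/
noncomputable def gaussMeasure : Measure ℂ :=
  (volume : Measure ℂ).withDensity fun z => ENNReal.ofReal (Real.exp (-(‖z‖ ^ 2)) / Real.pi)

/-- A function is entire if it is differentiable on all of `ℂ`. -/
def Entire (f : ℂ → ℂ) : Prop := Differentiable ℂ f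

/-- The squared Fock-space norm `∫ |f|² dμ`. -/
noncomputable def fockNormSq (f : ℂ → ℂ) : ℝ := ∫ z, ‖f z‖ ^ 2 ∂gaussMeasure

/-- Membership in the Fock space `F²`: entire and square integrable w.r.t. the Gaussian. -/
def MemFock (f : ℂ → ℂ) : Prop :=
  Entire f ∧ Integrable (fun z => ‖f z‖ ^ 2) gaussMeasure

/-- The Fock-space inner product `⟨f, g⟩ = ∫ f ḡ dμ`. -/
noncomputable def fockInner (f g : ℂ → ℂ) : ℂ :=
  ∫ z, f z * (starRingEnd ℂ) (g z) ∂gaussMeasure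

/-- The weighted composition operator `C_{ψ,φ} f = ψ · (f ∘ φ)`. -/
def wcomp (ψ φ f : ℂ → ℂ) : ℂ → ℂ := fun z => ψ z * f (φ z)

/-- Boundedness of `C_{ψ,φ}` on `F²`. -/
def BoundedWCO (ψ φ : ℂ → ℂ) : Prop :=
  ∃ C : ℝ, ∀ f, MemFock f →
    MemFock (wcomp ψ φ f) ∧ fockNormSq (wcomp ψ φ f) ≤ C * fockNormSq f

/-- The numerical range `W(C_{ψ,φ}) = {⟨C_{ψ,φ} f, f⟩ : ‖f‖ = 1}` on `F²`. -/
noncomputable def numRange (ψ φ : ℂ → ℂ) : Set ℂ :=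
  {w | ∃ f, MemFock f ∧ fockNormSq f = 1 ∧ w = fockInner (wcomp ψ φ f) f}

/-- The point spectrum of `C_{ψ,φ}` on `F²`. -/
def pointSpectrum (ψ φ : ℂ → ℂ) : Set ℂ :=
  {lam | ∃ f, MemFock f ∧ f ≠ 0 ∧ wcomp ψ φ f = fun z => lam * f z}

/-- Compactness of `C_{ψ,φ}` on `F²`: it is bounded and the image of every sequence in the
unit ball of `F²` has a subsequence which is Cauchy in the `F²` norm. -/
def CompactWCO (ψ φ : ℂ → ℂ) : Prop :=
  BoundedWCO ψ φ ∧ ∀ f : ℕ → ℂ → ℂ, (∀ k, MemFock (f k) ∧ fockNormSq (f k) ≤ 1) →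
    ∃ g : ℕ → ℕ, StrictMono g ∧ ∀ ε : ℝ, 0 < ε → ∃ N : ℕ, ∀ i, N ≤ i → ∀ j, N ≤ j →
      fockNormSq (fun z => wcomp ψ φ (f (g i)) z - wcomp ψ φ (f (g j)) z) < ε

/-!
Let `p` be the fixed point of `z ↦ a z + b` and `fₙ(z) = (z - p)ⁿ e^{z p̄}`. Then `C fₙ` is
`(z - p)ⁿ` times an entire function with value `aⁿ ψ(p) e^{|p|²}` at `p`, and the mean value
property for the rotation-invariant Gaussian, translated to `p`, gives
`⟨C fₙ, fₙ⟩ = ψ(p) aⁿ ‖fₙ‖²`. So the numerical range contains every `ψ(p) aⁿ`. Since `a` is off the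
positive real axis, some power `aⁿ` has nonpositive real part, and then `0` is a convex combination
of `1`, `aⁿ`, `a²ⁿ`; by the Toeplitz–Hausdorff theorem the numerical range contains `0`.

Once `0 ∈ W(C)`, convexity makes `W(C)` the image of the whole closed unit ball under
`f ↦ ⟨C f, f⟩`. The ball is weakly compact and, `C` being compact, this map is weakly continuous on
it, so `W(C)` is compact.
-/

section NumericalRange

open Filter Topology

open scoped InnerProductSpace ComplexConjugate

variable {H : Type*} [NormedAddCommGroup H] [InnerProductSpace ℂ H]

/-- The numerical range `W(T) = {⟨T x, x⟩ : ‖x‖ = 1}` of a linear operator. Mathlib's inner product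
is conjugate-linear in its first argument, so `⟨T x, x⟩` is written `⟪x, T x⟫_ℂ`. -/
def numericalRange (T : H →ₗ[ℂ] H) : Set ℂ :=
  {w | ∃ x : H, ‖x‖ = 1 ∧ ⟪x, T x⟫_ℂ = w}

theorem inner_smul_map_smul (T : H →ₗ[ℂ] H) (c : ℂ) (x : H) :
    ⟪c • x, T (c • x)⟫_ℂ = (‖c‖ ^ 2 : ℝ) * ⟪x, T x⟫_ℂ := by
  rw [map_smul, inner_smul_left, inner_smul_right, ← mul_assoc, conj_mul', ofReal_pow]

theorem inner_div_norm_sq_mem_numericalRange (T : H →ₗ[ℂ] H) {x : H} (hx : x ≠ 0) :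
    ⟪x, T x⟫_ℂ / (‖x‖ ^ 2 : ℝ) ∈ numericalRange T := by
  refine ⟨((‖x‖ : ℂ)⁻¹) • x, ?_, ?_⟩
  · rw [norm_smul, norm_inv, norm_real, norm_norm, inv_mul_cancel₀ (norm_ne_zero_iff.mpr hx)]
  · rw [inner_smul_map_smul, norm_inv, norm_real, norm_norm, inv_pow, ofReal_inv, inv_mul_eq_div]

theorem mul_add_mem_numericalRange {T : H →ₗ[ℂ] H} {w : ℂ} (hw : w ∈ numericalRange T)
    (α β : ℂ) : α * w + β ∈ numericalRange (α • T + β • LinearMap.id) := by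
  obtain ⟨x, hx, rfl⟩ := hw
  refine ⟨x, hx, ?_⟩
  simp [inner_self_eq_norm_sq_to_K, hx]

/-- Along the segment from `x` to `y` the quadratic form is real, and the intermediate value
theorem applies to the Rayleigh quotient. -/
theorem ofReal_mem_numericalRange_of_im_eq_zero {T : H →ₗ[ℂ] H} {x y : H}
    (hx : ‖x‖ = 1) (hy : ‖y‖ = 1) (hTx : ⟪x, T x⟫_ℂ = 0) (hTy : ⟪y, T y⟫_ℂ = 1)
    (him : (⟪x, T y⟫_ℂ + ⟪y, T x⟫_ℂ).im = 0) {s : ℝ} (hs : s ∈ Set.Icc (0 : ℝ) 1) :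
    (s : ℂ) ∈ numericalRange T := by
  let v : ℝ → H := fun t => ((1 - t : ℝ) : ℂ) • x + (t : ℂ) • y
  let m : ℝ := (⟪x, T y⟫_ℂ + ⟪y, T x⟫_ℂ).re
  have hm : ⟪x, T y⟫_ℂ + ⟪y, T x⟫_ℂ = m := Complex.ext rfl him
  have hTv (t : ℝ) : ⟪v t, T (v t)⟫_ℂ = (t ^ 2 + t * (1 - t) * m : ℝ) := by
    simp only [v, map_add, map_smul, inner_add_left, inner_add_right, inner_smul_left,
      inner_smul_right, conj_ofReal, hTx, hTy]
    push_cast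
    linear_combination (t : ℂ) * (1 - t) * hm
  have hv (t : ℝ) : v t ≠ 0 := by
    intro h
    have hxy : ((1 - t : ℝ) : ℂ) • x = (-t : ℂ) • y := by
      rw [neg_smul]
      exact eq_neg_of_add_eq_zero_left h
    have hform := inner_smul_map_smul T (1 - t : ℝ) x
    rw [hxy, inner_smul_map_smul, hTx, hTy] at hform
    obtain rfl : t = 0 := by simpa using hform
    obtain rfl : x = 0 := by simpa using hxy
    simp at hx
  have hcont : Continuous fun t => (t ^ 2 + t * (1 - t) * m) / ‖v t‖ ^ 2 :=
    Continuous.div (by fun_prop) (by fun_prop) fun t => pow_ne_zero 2 (norm_ne_zero_iff.mpr (hv t))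
  obtain ⟨t, -, ht⟩ := intermediate_value_Icc zero_le_one hcont.continuousOn
    (show s ∈ _ by simpa [v, hx, hy] using hs)
  rw [← ht, ofReal_div, ← hTv]
  exact inner_div_norm_sq_mem_numericalRange T (hv t)

theorem exists_norm_eq_one_mul_add_conj_mul_im_eq_zero (u v : ℂ) :
    ∃ c : ℂ, ‖c‖ = 1 ∧ (c * u + conj c * v).im = 0 := by
  let d := u - conj v
  have him (c : ℂ) : (c * u + conj c * v).im = (c * d).im := by
    simp only [d, add_im, mul_im, sub_re, sub_im, conj_re, conj_im]
    ring
  rcases eq_or_ne d 0 with hd | hd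
  · exact ⟨1, norm_one, by rw [him, hd, mul_zero, zero_im]⟩
  · refine ⟨conj d / ‖d‖, by simp [hd], ?_⟩
    rw [him, div_mul_eq_mul_div, conj_mul', ← ofReal_pow, ← ofReal_div, ofReal_im]

theorem ofReal_mem_numericalRange {T : H →ₗ[ℂ] H} (h0 : 0 ∈ numericalRange T)
    (h1 : 1 ∈ numericalRange T) {s : ℝ} (hs : s ∈ Set.Icc (0 : ℝ) 1) :
    (s : ℂ) ∈ numericalRange T := by
  obtain ⟨x, hx, hTx⟩ := h0
  obtain ⟨y, hy, hTy⟩ := h1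
  obtain ⟨c, hc, him⟩ :=
    exists_norm_eq_one_mul_add_conj_mul_im_eq_zero ⟪x, T y⟫_ℂ ⟪y, T x⟫_ℂ
  refine ofReal_mem_numericalRange_of_im_eq_zero (y := c • y) hx ?_ hTx ?_ ?_ hs
  · rw [norm_smul, hc, hy, one_mul]
  · rw [inner_smul_map_smul, hc, hTy, one_pow, ofReal_one, one_mul]
  · rwa [map_smul, inner_smul_right, inner_smul_left]

theorem convex_numericalRange (T : H →ₗ[ℂ] H) : Convex ℝ (numericalRange T) := by
  rw [convex_iff_segment_subset]
  intro α hα β hβ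
  rcases eq_or_ne α β with rfl | hαβ
  · rwa [segment_same, Set.singleton_subset_iff]
  have hsub : β - α ≠ 0 := sub_ne_zero.mpr hαβ.symm
  rw [segment_eq_image']
  rintro _ ⟨s, hs, rfl⟩
  let S : H →ₗ[ℂ] H := (β - α)⁻¹ • T + (-((β - α)⁻¹ * α)) • LinearMap.id
  have h0 : 0 ∈ numericalRange S := by
    convert mul_add_mem_numericalRange hα (β - α)⁻¹ (-((β - α)⁻¹ * α)) using 1
    ring
  have h1 : 1 ∈ numericalRange S := by
    convert mul_add_mem_numericalRange hβ (β - α)⁻¹ (-((β - α)⁻¹ * α)) using 1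
    field_simp
    ring
  have hT : (β - α) • S + α • LinearMap.id = T := by
    simp only [S, smul_add, neg_smul, smul_neg, smul_smul, mul_inv_cancel_left₀ hsub,
      mul_inv_cancel₀ hsub, one_smul, neg_add_cancel_right]
  have hmem := mul_add_mem_numericalRange (ofReal_mem_numericalRange h0 h1 hs) (β - α) α
  rwa [hT, mul_comm, add_comm, ← real_smul] at hmem

theorem numericalRange_eq_image_closedBall {T : H →ₗ[ℂ] H} (h0 : 0 ∈ numericalRange T) :
    numericalRange T = (fun x => ⟪x, T x⟫_ℂ) '' Metric.closedBall 0 1 := by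
  refine Set.Subset.antisymm ?_ ?_
  · rintro _ ⟨x, hx, rfl⟩
    exact ⟨x, by simp [hx], rfl⟩
  · rintro _ ⟨x, hx, rfl⟩
    rw [mem_closedBall_zero_iff] at hx
    rcases eq_or_ne x 0 with rfl | hx0
    · simpa using h0
    have hmem := (convex_numericalRange T).smul_mem_of_zero_mem h0
      (inner_div_norm_sq_mem_numericalRange T hx0)
      (t := ‖x‖ ^ 2) ⟨by positivity, pow_le_one₀ (norm_nonneg x) hx⟩
    have hne : ((‖x‖ ^ 2 : ℝ) : ℂ) ≠ 0 := by simpa using hx0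
    rwa [real_smul, mul_div_cancel₀ _ hne] at hmem

variable {K : Type*} [NormedAddCommGroup K] [InnerProductSpace ℂ K]

theorem exists_tendsto_inner_of_closedBall_mem [CompleteSpace H] {u : Ultrafilter H}
    (hu : Metric.closedBall 0 1 ∈ u) :
    ∃ x₀ : H, ‖x₀‖ ≤ 1 ∧ ∀ y, Tendsto (fun x => ⟪x, y⟫_ℂ) u (𝓝 ⟪x₀, y⟫_ℂ) := by
  let D := InnerProductSpace.toDual ℂ H
  obtain ⟨ξ, hξ, hlim⟩ :=
    (WeakDual.isCompact_closedBall (0 : StrongDual ℂ H) 1).ultrafilter_le_nhds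
    (u.map fun x => StrongDual.toWeakDual (D x)) <| by
      rw [le_principal_iff, Ultrafilter.mem_coe, Ultrafilter.mem_map]
      filter_upwards [hu] with x hx
      simpa using hx
  refine ⟨D.symm (WeakDual.toStrongDual ξ), by simpa using hξ, fun y => ?_⟩
  rw [InnerProductSpace.toDual_symm_apply]
  exact ((WeakDual.eval_continuous y).tendsto ξ).comp hlim

/-- Along `u` the images converge in norm, by compactness, and the weak limit of `x` identifies
their limit. -/
theorem tendsto_of_isCompactOperator_of_tendsto_inner [CompleteSpace H] [CompleteSpace K]
    {T : H →ₗ[ℂ] K} (hT : IsCompactOperator T) {u : Ultrafilter H}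
    (hu : Metric.closedBall 0 1 ∈ u) {x₀ : H}
    (hx₀ : ∀ y, Tendsto (fun x => ⟪x, y⟫_ℂ) u (𝓝 ⟪x₀, y⟫_ℂ)) : Tendsto T u (𝓝 (T x₀)) := by
  obtain ⟨z, -, hz⟩ := (hT.isCompact_closure_image_closedBall 1).ultrafilter_le_nhds (u.map T) <| by
    rw [le_principal_iff, Ultrafilter.mem_coe, Ultrafilter.mem_map]
    filter_upwards [hu] with x hx
    exact subset_closure ⟨x, hx, rfl⟩
  have hTz : Tendsto T u (𝓝 z) := hz
  let S : H →L[ℂ] K := .mkOfIsCompactOperator hT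
  have hzx : z = T x₀ := ext_inner_right ℂ fun y => by
    have hz' : Tendsto (fun x => ⟪T x, y⟫_ℂ) u (𝓝 ⟪z, y⟫_ℂ) := hTz.inner tendsto_const_nhds
    have hx' : Tendsto (fun x => ⟪T x, y⟫_ℂ) u (𝓝 ⟪T x₀, y⟫_ℂ) := by
      have hS := hx₀ (S.adjoint y)
      simp only [ContinuousLinearMap.adjoint_inner_right] at hS
      exact hS
    exact tendsto_nhds_unique hz' hx'
  rwa [← hzx]

theorem tendsto_inner_of_tendsto_inner_of_tendsto {ι : Type*} {l : Filter ι} {f g : ι → H}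
    {x y : H} (hf : ∀ᶠ i in l, ‖f i‖ ≤ 1)
    (hfx : ∀ z, Tendsto (fun i => ⟪f i, z⟫_ℂ) l (𝓝 ⟪x, z⟫_ℂ)) (hg : Tendsto g l (𝓝 y)) :
    Tendsto (fun i => ⟪f i, g i⟫_ℂ) l (𝓝 ⟪x, y⟫_ℂ) := by
  have hdiff : Tendsto (fun i => ⟪f i, g i - y⟫_ℂ) l (𝓝 0) := by
    refine squeeze_zero_norm' ?_ (tendsto_iff_norm_sub_tendsto_zero.mp hg)
    filter_upwards [hf] with i hi
    exact (norm_inner_le_norm _ _).trans (mul_le_of_le_one_left (norm_nonneg _) hi)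
  simpa only [inner_sub_right, sub_add_cancel, zero_add] using hdiff.add (hfx y)

theorem isCompact_image_inner_map_self [CompleteSpace H] {T : H →ₗ[ℂ] H}
    (hT : IsCompactOperator T) :
    IsCompact ((fun x => ⟪x, T x⟫_ℂ) '' Metric.closedBall 0 1) := by
  rw [isCompact_iff_ultrafilter_le_nhds]
  intro w hw
  rw [le_principal_iff] at hw
  let u := Ultrafilter.ofComapInfPrincipal hw
  have hu : Metric.closedBall 0 1 ∈ u := Ultrafilter.ofComapInfPrincipal_mem hw
  obtain ⟨x₀, hx₀, hlim⟩ := exists_tendsto_inner_of_closedBall_mem hu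
  refine ⟨⟪x₀, T x₀⟫_ℂ, ⟨x₀, by simpa using hx₀, rfl⟩, ?_⟩
  rw [← Ultrafilter.ofComapInfPrincipal_eq_of_map hw]
  refine tendsto_inner_of_tendsto_inner_of_tendsto ?_ hlim
    (tendsto_of_isCompactOperator_of_tendsto_inner hT hu hlim)
  filter_upwards [hu] with x hx
  simpa using hx

theorem isClosed_numericalRange [CompleteSpace H] {T : H →ₗ[ℂ] H} (hT : IsCompactOperator T)
    (h0 : 0 ∈ numericalRange T) : IsClosed (numericalRange T) := by
  rw [numericalRange_eq_image_closedBall h0]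
  exact (isCompact_image_inner_map_self hT).isClosed

end NumericalRange

theorem isCompactOperator_of_exists_cauchySeq {𝕜 E F : Type*} [NontriviallyNormedField 𝕜]
    [SeminormedAddCommGroup E] [NormedSpace 𝕜 E] [NormedAddCommGroup F] [NormedSpace 𝕜 F]
    [CompleteSpace F] (T : E →ₗ[𝕜] F)
    (hT : ∀ x : ℕ → E, (∀ k, ‖x k‖ ≤ 1) →
      ∃ g : ℕ → ℕ, StrictMono g ∧ CauchySeq fun k => T (x (g k))) :
    IsCompactOperator T := by
  rw [isCompactOperator_iff_isCompact_closure_image_closedBall T one_pos]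
  refine IsSeqCompact.isCompact fun y hy => ?_
  have happrox (k : ℕ) : ∃ x : E, ‖x‖ ≤ 1 ∧ dist (y k) (T x) < 1 / ((k : ℝ) + 1) := by
    obtain ⟨_, ⟨x, hx, rfl⟩, hd⟩ := Metric.mem_closure_iff.mp (hy k) _ Nat.one_div_pos_of_nat
    exact ⟨x, by simpa using hx, hd⟩
  choose x hx hd using happrox
  obtain ⟨g, hg, hc⟩ := hT x hx
  obtain ⟨z, hz⟩ := cauchySeq_tendsto_of_complete hc
  have hyz : Filter.Tendsto (y ∘ g) Filter.atTop (nhds z) := by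
    refine (tendsto_iff_of_dist ?_).mpr hz
    exact squeeze_zero (fun _ => dist_nonneg) (fun k => (hd (g k)).le)
      (tendsto_one_div_add_atTop_nhds_zero_nat.comp hg.tendsto_atTop)
  exact ⟨z, isClosed_closure.mem_of_tendsto hyz (.of_forall fun k => hy _), g, hg, hyz⟩

section ConvexHull

theorem arg_sq_of_re_pos {z : ℂ} (hz : 0 < z.re) : (z ^ 2).arg = 2 * z.arg := by
  have hz0 : z ≠ 0 := by
    rintro rfl
    exact hz.false
  obtain ⟨hlo, hhi⟩ := abs_lt.mp (abs_arg_lt_pi_div_two_iff.mpr (.inl hz))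
  rw [sq, arg_mul hz0 hz0 ⟨by linarith, by linarith⟩, two_mul]

/-- As long as all `a ^ 2 ^ k` lie in the open right half-plane, squaring doubles the argument. -/
theorem exists_re_pow_nonpos {a : ℂ} (ha : ∀ t : ℝ, 0 < t → a ≠ t) : ∃ n : ℕ, (a ^ n).re ≤ 0 := by
  by_contra! hpos
  have harg (k : ℕ) : (a ^ 2 ^ k).arg = 2 ^ k * a.arg := by
    induction k with
    | zero => simp
    | succ k ih => rw [pow_succ, pow_mul, arg_sq_of_re_pos (hpos _), ih, pow_succ', mul_assoc]
  have hbound (k : ℕ) : 2 ^ k * |a.arg| < Real.pi / 2 := by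
    simpa [harg, abs_mul] using abs_arg_lt_pi_div_two_iff.mpr (.inl (hpos (2 ^ k)))
  have harg_ne : a.arg ≠ 0 := by
    intro h
    obtain ⟨-, him⟩ := arg_eq_zero_iff.mp h
    exact ha a.re (by simpa using hpos 1) (Complex.ext rfl him)
  obtain ⟨k, hk⟩ := pow_unbounded_of_one_lt (Real.pi / 2 / |a.arg|) one_lt_two
  rw [div_lt_iff₀ (abs_pos.mpr harg_ne)] at hk
  exact hk.not_gt (hbound k)

/-- For `b = a ^ n` with `Re b ≤ 0`, the identity `b² - 2 (Re b) b + |b|² = 0` expresses `0` with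
nonnegative weights. -/
theorem zero_mem_of_convex_of_mul_pow_mem {W : Set ℂ} (hW : Convex ℝ W) {a c : ℂ}
    (ha : ∀ t : ℝ, 0 < t → a ≠ t) (h : ∀ n : ℕ, c * a ^ n ∈ W) : 0 ∈ W := by
  obtain ⟨n, hn⟩ := exists_re_pow_nonpos ha
  set b := a ^ n with hb
  have hquad : b ^ 2 - 2 * b.re * b + (‖b‖ : ℂ) ^ 2 = 0 := by
    have hre := add_conj b
    push_cast at hre
    rw [← conj_mul']
    linear_combination b * hre
  let w : Fin 3 → ℝ := ![‖b‖ ^ 2, -(2 * b.re), 1]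
  let z : Fin 3 → ℂ := ![c, c * b, c * b ^ 2]
  have hmem : Finset.univ.centerMass w z ∈ W := by
    refine hW.centerMass_mem (fun i _ => ?_) ?_ fun i _ => ?_
    · fin_cases i
      · exact sq_nonneg ‖b‖
      · exact neg_nonneg.mpr (by linarith)
      · exact zero_le_one
    · simp only [w, Fin.sum_univ_three, Matrix.cons_val]
      nlinarith [sq_nonneg ‖b‖]
    · fin_cases i
      · simpa [z] using h 0
      · exact h n
      · simpa [z, hb, ← pow_mul] using h (n * 2)
  have hsum : ∑ i, w i • z i = 0 := by
    simp only [w, z, Fin.sum_univ_three, Matrix.cons_val, real_smul]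
    push_cast
    linear_combination c * hquad
  rwa [Finset.centerMass, hsum, smul_zero] at hmem

end ConvexHull

section RotationInvariance

theorem rotation_circleExp_apply (θ : ℝ) (w : ℂ) :
    rotation (Circle.exp θ) w = circleMap 0 1 θ * w := by
  rw [rotation_apply, Circle.coe_exp, circleMap_zero, ofReal_one, one_mul]

theorem circleAverage_comp_mul_right {E : Type*} [NormedAddCommGroup E] [NormedSpace ℂ E]
    [CompleteSpace E] {h : ℂ → E} (hh : Differentiable ℂ h) (w : ℂ) :
    Real.circleAverage (fun ζ => h (ζ * w)) 0 1 = h 0 := by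
  have hd : Differentiable ℂ fun ζ => h (ζ * w) := hh.comp (by fun_prop)
  rw [hd.diffContOnCl.circleAverage, zero_mul]

theorem integral_eq_integral_circleAverage {E : Type*} [NormedAddCommGroup E] [NormedSpace ℝ E]
    [CompleteSpace E] {μ : Measure ℂ} [SFinite μ]
    (hμ : ∀ c : Circle, MeasurePreserving (rotation c) μ μ)
    {F : ℂ → E} (hF : Integrable F μ) :
    ∫ w, F w ∂μ = ∫ w, Real.circleAverage (fun ζ => F (ζ * w)) 0 1 ∂μ := by
  have hrot (θ : ℝ) : MeasurePreserving (fun w => circleMap 0 1 θ * w) μ μ := by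
    simpa only [← rotation_circleExp_apply] using hμ (Circle.exp θ)
  have hemb (θ : ℝ) : MeasurableEmbedding fun w : ℂ => circleMap 0 1 θ * w := by
    simp only [← rotation_circleExp_apply]
    exact (rotation (Circle.exp θ)).toHomeomorph.measurableEmbedding
  let ν : Measure ℝ := volume.restrict (Set.Ioc 0 (2 * Real.pi))
  have hskew : MeasurePreserving (fun q : ℝ × ℂ => (q.1, circleMap 0 1 q.1 * q.2))
      (ν.prod μ) (ν.prod μ) :=
    (MeasurePreserving.id ν).skew_product (g := fun θ w => circleMap 0 1 θ * w) (by fun_prop)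
      (.of_forall fun θ => (hrot θ).map_eq)
  have hint : Integrable (fun q : ℝ × ℂ => F (circleMap 0 1 q.1 * q.2)) (ν.prod μ) :=
    hskew.integrable_comp_of_integrable (hF.comp_snd ν)
  simp only [Real.circleAverage_def, intervalIntegral.integral_of_le Real.two_pi_pos.le,
    integral_smul]
  rw [← integral_integral_swap (f := fun θ w => F (circleMap 0 1 θ * w)) hint]
  simp only [(hrot _).integral_comp (hemb _) F]
  rw [setIntegral_const, Real.volume_real_Ioc_of_le Real.two_pi_pos.le, sub_zero,
    inv_smul_smul₀ Real.two_pi_pos.ne']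

theorem integral_norm_pow_smul_of_differentiable {E : Type*} [NormedAddCommGroup E]
    [NormedSpace ℂ E] [CompleteSpace E] {μ : Measure ℂ} [SFinite μ]
    (hμ : ∀ c : Circle, MeasurePreserving (rotation c) μ μ) {h : ℂ → E}
    (hh : Differentiable ℂ h) (n : ℕ) (hint : Integrable (fun w => ‖w‖ ^ n • h w) μ) :
    ∫ w, ‖w‖ ^ n • h w ∂μ = (∫ w, ‖w‖ ^ n ∂μ) • h 0 := by
  rw [integral_eq_integral_circleAverage hμ hint, ← integral_smul_const]
  congr 1 with w
  have havg : Real.circleAverage (fun ζ => ‖ζ * w‖ ^ n • h (ζ * w)) 0 1 =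
      Real.circleAverage (fun ζ => ‖w‖ ^ n • h (ζ * w)) 0 1 :=
    Real.circleAverage_congr_sphere fun ζ hζ => by
      have hζ' : ‖ζ‖ = 1 := by simpa using hζ
      simp only [norm_mul, hζ', one_mul]
  rw [havg, Real.circleAverage_fun_smul, circleAverage_comp_mul_right hh]

end RotationInvariance

section Gaussian

open scoped Nat ComplexConjugate

variable {E : Type*} [NormedAddCommGroup E] [NormedSpace ℝ E]

instance : SFinite gaussMeasure := by
  unfold gaussMeasure
  infer_instance

theorem integral_gaussMeasure (f : ℂ → E) :
    ∫ z, f z ∂gaussMeasure = ∫ z, (Real.exp (-(‖z‖ ^ 2)) / Real.pi) • f z := by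
  rw [gaussMeasure, integral_withDensity_eq_integral_toReal_smul (by fun_prop)
    (.of_forall fun _ => ENNReal.ofReal_lt_top)]
  congr 1 with z
  rw [ENNReal.toReal_ofReal (by positivity)]

theorem integrable_gaussMeasure_iff {f : ℂ → E} :
    Integrable f gaussMeasure ↔ Integrable fun z => (Real.exp (-(‖z‖ ^ 2)) / Real.pi) • f z := by
  rw [gaussMeasure, integrable_withDensity_iff_integrable_smul' (by fun_prop)
    (.of_forall fun _ => ENNReal.ofReal_lt_top)]
  congr! with z
  rw [ENNReal.toReal_ofReal (by positivity)]

theorem exp_neg_norm_add_sq (w p : ℂ) : Real.exp (-(‖w + p‖ ^ 2)) =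
    Real.exp (-(‖w‖ ^ 2)) * Real.exp (-(2 * (w * conj p).re + ‖p‖ ^ 2)) := by
  rw [← Real.exp_add, Complex.sq_norm, normSq_add, ← Complex.sq_norm, ← Complex.sq_norm]
  ring_nf

theorem integral_gaussMeasure_eq_integral_add (f : ℂ → E) (p : ℂ) :
    ∫ z, f z ∂gaussMeasure =
      ∫ w, Real.exp (-(2 * (w * conj p).re + ‖p‖ ^ 2)) • f (w + p) ∂gaussMeasure := by
  rw [integral_gaussMeasure, integral_gaussMeasure, ← integral_add_right_eq_self _ p]
  congr 1 with w
  rw [exp_neg_norm_add_sq, smul_smul, div_mul_eq_mul_div]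

theorem integrable_gaussMeasure_iff_add {f : ℂ → E} (p : ℂ) :
    Integrable f gaussMeasure ↔ Integrable
      (fun w => Real.exp (-(2 * (w * conj p).re + ‖p‖ ^ 2)) • f (w + p)) gaussMeasure := by
  rw [integrable_gaussMeasure_iff, integrable_gaussMeasure_iff,
    ← (measurePreserving_add_right volume p).integrable_comp_emb (measurableEmbedding_addRight p)]
  congr! 2 with w
  rw [Function.comp_apply, exp_neg_norm_add_sq, smul_smul, div_mul_eq_mul_div]

theorem measurePreserving_rotation_gaussMeasure (c : Circle) :
    MeasurePreserving (rotation c) gaussMeasure gaussMeasure := by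
  refine ⟨(rotation c).continuous.measurable, Measure.ext fun s hs => ?_⟩
  have hmeas : MeasurableSet (rotation c ⁻¹' s) := (rotation c).continuous.measurable hs
  rw [Measure.map_apply (rotation c).continuous.measurable hs, gaussMeasure,
    withDensity_apply _ hmeas, withDensity_apply _ hs,
    ← (rotation c).measurePreserving.setLIntegral_comp_preimage hs (by fun_prop)]
  simp only [LinearIsometryEquiv.norm_map]

theorem integral_norm_pow_gaussMeasure (n : ℕ) : ∫ w, ‖w‖ ^ (2 * n) ∂gaussMeasure = (n ! : ℝ) := by
  have hn : (-2 : ℝ) < 2 * n := by linarith [n.cast_nonneg (α := ℝ)]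
  have hΓ := Complex.integral_rpow_mul_exp_neg_rpow one_le_two hn
  have hg : Real.Gamma ((2 * n + 2) / 2) = n ! := by
    rw [← Real.Gamma_nat_eq_factorial]
    ring_nf
  calc ∫ w, ‖w‖ ^ (2 * n) ∂gaussMeasure
    _ = (∫ w : ℂ, ‖w‖ ^ (2 * n : ℝ) * Real.exp (-‖w‖ ^ (2 : ℝ))) / Real.pi := by
      rw [integral_gaussMeasure, ← integral_div]
      congr 1 with w
      have hpow : ‖w‖ ^ (2 * n : ℝ) = ‖w‖ ^ (2 * n) := by exact_mod_cast Real.rpow_natCast _ _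
      rw [hpow, Real.rpow_two, smul_eq_mul]
      ring
    _ = n ! := by
      rw [hΓ, hg]
      field_simp

theorem integrable_norm_pow_gaussMeasure (n : ℕ) :
    Integrable (fun w => ‖w‖ ^ (2 * n)) gaussMeasure := by
  refine .of_integral_ne_zero ?_
  rw [integral_norm_pow_gaussMeasure]
  exact_mod_cast n.factorial_ne_zero

instance : gaussMeasure.IsOpenPosMeasure :=
  (withDensity_absolutelyContinuous' (by fun_prop) <| .of_forall fun z =>
    (ENNReal.ofReal_pos.mpr (by positivity)).ne').isOpenPosMeasure

end Gaussian

section Fock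

open Filter Topology

open scoped Nat InnerProductSpace ComplexConjugate

theorem tendstoLocallyUniformly_of_norm_sub_le {ι X E : Type*} [TopologicalSpace X]
    [SeminormedAddCommGroup E] {l : Filter ι} {f : ι → X → E} {F : X → E} {M : X → ℝ} {δ : ι → ℝ}
    (hM : Continuous M) (hδ : Tendsto δ l (𝓝 0)) (h : ∀ i x, ‖f i x - F x‖ ≤ M x * δ i) :
    TendstoLocallyUniformly f F l := by
  rw [tendstoLocallyUniformly_iff_forall_tendsto]
  intro x
  rw [tendsto_uniformity_iff_dist_tendsto_zero]
  have hbound : Tendsto (fun q : ι × X => M q.2 * δ q.1) (l ×ˢ 𝓝 x) (𝓝 (M x * 0)) :=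
    ((hM.tendsto x).comp tendsto_snd).mul (hδ.comp tendsto_fst)
  rw [mul_zero] at hbound
  refine squeeze_zero (fun _ => dist_nonneg) (fun q => ?_) hbound
  rw [dist_comm, dist_eq_norm]
  exact h q.1 q.2

theorem MemFock.memLp {f : ℂ → ℂ} (hf : MemFock f) : MemLp f 2 gaussMeasure :=
  (memLp_two_iff_integrable_sq_norm hf.1.continuous.aestronglyMeasurable).mpr hf.2

theorem memFock_iff {f : ℂ → ℂ} : MemFock f ↔ Entire f ∧ MemLp f 2 gaussMeasure :=
  ⟨fun hf => ⟨hf.1, hf.memLp⟩, fun hf => ⟨hf.1,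
    (memLp_two_iff_integrable_sq_norm hf.1.continuous.aestronglyMeasurable).mp hf.2⟩⟩

theorem MemFock.integrable_mul_conj {f g : ℂ → ℂ} (hf : MemFock f) (hg : MemFock g) :
    Integrable (fun z => f z * conj (g z)) gaussMeasure :=
  hf.memLp.integrable_mul hg.memLp.star

/-- The function `(z - p)ⁿ e^{z p̄}`: the reproducing kernel of `F²` at `p` multiplied by the
`n`-th monomial centred at `p`. It is not normalized. -/
noncomputable def fockMonomial (n : ℕ) (p z : ℂ) : ℂ :=
  (z - p) ^ n * exp (z * conj p)

theorem memFock_fockMonomial (n : ℕ) (p : ℂ) : MemFock (fockMonomial n p) := by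
  refine ⟨by unfold Entire fockMonomial; fun_prop, ?_⟩
  rw [integrable_gaussMeasure_iff_add p]
  convert (integrable_norm_pow_gaussMeasure n).const_mul (Real.exp (‖p‖ ^ 2)) using 2 with w
  have hexp : Real.exp (-(2 * (w * conj p).re + ‖p‖ ^ 2)) * Real.exp ((w + p) * conj p).re ^ 2 =
      Real.exp (‖p‖ ^ 2) := by
    rw [← Real.exp_nat_mul, ← Real.exp_add, add_mul, add_re, mul_conj', ← ofReal_pow, ofReal_re]
    push_cast
    ring_nf
  rw [fockMonomial, add_sub_cancel_right, norm_mul, norm_pow, norm_exp, smul_eq_mul, mul_pow,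
    ← pow_mul']
  linear_combination ‖w‖ ^ (2 * n) * hexp

/-- Translating by `p` moves the weight `|z - p|²ⁿ` to the origin, where the mean value property
applies. -/
theorem fockInner_mul_fockMonomial {n : ℕ} {p : ℂ} {k : ℂ → ℂ} (hk : Entire k)
    (hmem : MemFock fun z => (z - p) ^ n * k z) :
    fockInner (fun z => (z - p) ^ n * k z) (fockMonomial n p) = (n ! : ℂ) * k p := by
  have hshift (w : ℂ) : Real.exp (-(2 * (w * conj p).re + ‖p‖ ^ 2)) •
      ((w + p - p) ^ n * k (w + p) * conj (fockMonomial n p (w + p))) =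
      ‖w‖ ^ (2 * n) • (k (w + p) * exp (-(w * conj p))) := by
    have hexp : exp (-(2 * (w * conj p).re + ‖p‖ ^ 2)) * exp (conj (w + p) * p) =
        exp (-(w * conj p)) := by
      have hre := add_conj (w * conj p)
      rw [← exp_add, ← conj_mul']
      simp only [map_add, map_mul, conj_conj] at hre ⊢
      push_cast at hre
      congr 1
      linear_combination hre
    simp only [fockMonomial, add_sub_cancel_right, map_mul, map_pow, ← exp_conj, conj_conj,
      real_smul]
    push_cast
    rw [pow_mul, ← mul_conj' w, mul_pow]
    linear_combination k (w + p) * w ^ n * conj w ^ n * hexp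
  have hint := hmem.integrable_mul_conj (memFock_fockMonomial n p)
  rw [integrable_gaussMeasure_iff_add p] at hint
  rw [fockInner, integral_gaussMeasure_eq_integral_add _ p]
  simp only [hshift] at hint ⊢
  have hdiff : Differentiable ℂ fun w => k (w + p) * exp (-(w * conj p)) :=
    (hk.comp (by fun_prop)).mul (by fun_prop)
  rw [integral_norm_pow_smul_of_differentiable measurePreserving_rotation_gaussMeasure hdiff _ hint,
    integral_norm_pow_gaussMeasure]
  simp

theorem MemFock.fockInner_fockMonomial_zero {f : ℂ → ℂ} (hf : MemFock f) (p : ℂ) :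
    fockInner f (fockMonomial 0 p) = f p := by
  simpa using fockInner_mul_fockMonomial (n := 0) (p := p) hf.1 (by simpa using hf)

theorem fockInner_fockMonomial_self (n : ℕ) (p : ℂ) :
    fockInner (fockMonomial n p) (fockMonomial n p) = (n ! : ℂ) * exp (p * conj p) :=
  fockInner_mul_fockMonomial (k := fun z => exp (z * conj p)) (by unfold Entire; fun_prop)
    (memFock_fockMonomial n p)

/-- The underlying vector space of `F²`. -/
def fockSubmodule : Submodule ℂ (ℂ → ℂ) where
  carrier := {f | MemFock f}
  zero_mem' := memFock_iff.mpr ⟨differentiable_const 0, MemLp.zero⟩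
  add_mem' hf hg := memFock_iff.mpr ⟨Differentiable.add hf.1 hg.1, hf.memLp.add hg.memLp⟩
  smul_mem' c _ hf := memFock_iff.mpr ⟨Differentiable.const_smul hf.1 c, hf.memLp.const_smul c⟩

/-- The Fock space `F²` as a Hilbert space. It is a type of its own, so that it carries the norm
of `L²(gaussMeasure)` and not the topology of pointwise convergence. -/
def FockSpace : Type := fockSubmodule

namespace FockSpace

instance : AddCommGroup FockSpace := inferInstanceAs (AddCommGroup fockSubmodule)

instance : Module ℂ FockSpace := inferInstanceAs (Module ℂ fockSubmodule)

instance : CoeFun FockSpace fun _ => ℂ → ℂ := ⟨Subtype.val⟩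

theorem memFock (f : FockSpace) : MemFock f := f.2

/-- The class in `L²` of a function in the Fock space. -/
noncomputable def toLp : FockSpace →ₗ[ℂ] Lp ℂ 2 gaussMeasure where
  toFun f := f.memFock.memLp.toLp f
  map_add' _ _ := rfl
  map_smul' _ _ := rfl

theorem coeFn_toLp (f : FockSpace) : toLp f =ᵐ[gaussMeasure] f :=
  f.memFock.memLp.coeFn_toLp

theorem toLp_injective : Function.Injective toLp := fun f g hfg => by
  have hae : (f : ℂ → ℂ) =ᵐ[gaussMeasure] g :=
    (coeFn_toLp f).symm.trans (hfg ▸ coeFn_toLp g)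
  exact Subtype.ext <|
    (f.memFock.1.continuous.ae_eq_iff_eq gaussMeasure g.memFock.1.continuous).mp hae

noncomputable instance : NormedAddCommGroup FockSpace :=
  NormedAddCommGroup.induced _ _ toLp toLp_injective

noncomputable instance : InnerProductSpace ℂ FockSpace := InnerProductSpace.induced toLp

theorem inner_eq_fockInner (f g : FockSpace) : ⟪f, g⟫_ℂ = fockInner g f := by
  rw [inner_induced_eq f g toLp, L2.inner_def, fockInner]
  refine integral_congr_ae ?_
  filter_upwards [coeFn_toLp f, coeFn_toLp g] with z hf hg
  rw [hf, hg, RCLike.inner_apply]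

theorem sq_norm_eq_fockNormSq (f : FockSpace) : ‖f‖ ^ 2 = fockNormSq f := by
  have hself : fockInner f f = fockNormSq f := by
    simp only [fockInner, fockNormSq, ← integral_complex_ofReal, mul_conj', ofReal_pow]
  rw [norm_sq_eq_re_inner (𝕜 := ℂ), inner_eq_fockInner, hself]
  exact ofReal_re _

theorem norm_eq_one_iff {f : FockSpace} : ‖f‖ = 1 ↔ fockNormSq f = 1 := by
  rw [← sq_norm_eq_fockNormSq, pow_eq_one_iff_of_nonneg (norm_nonneg f) two_ne_zero]

/-- `fockMonomial` as a vector of the Fock space. -/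
noncomputable def monomial (n : ℕ) (p : ℂ) : FockSpace :=
  ⟨fockMonomial n p, memFock_fockMonomial n p⟩

theorem inner_monomial_zero (p : ℂ) (f : FockSpace) : ⟪monomial 0 p, f⟫_ℂ = f p := by
  rw [inner_eq_fockInner]
  exact f.memFock.fockInner_fockMonomial_zero p

theorem sq_norm_monomial (n : ℕ) (p : ℂ) :
    ‖monomial n p‖ ^ 2 = n ! * Real.exp (‖p‖ ^ 2) := by
  have hself : ⟪monomial n p, monomial n p⟫_ℂ = (n ! * Real.exp (‖p‖ ^ 2) : ℝ) := by
    rw [inner_eq_fockInner]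
    push_cast
    rw [← mul_conj']
    exact fockInner_fockMonomial_self n p
  rw [norm_sq_eq_re_inner (𝕜 := ℂ), hself]
  exact ofReal_re _

theorem monomial_ne_zero (n : ℕ) (p : ℂ) : monomial n p ≠ 0 := by
  rw [← norm_ne_zero_iff, ← pow_ne_zero_iff two_ne_zero, sq_norm_monomial]
  positivity

theorem norm_sub_inner_monomial_zero_le (f : FockSpace) (g : Lp ℂ 2 gaussMeasure) (z : ℂ) :
    ‖f z - ⟪toLp (monomial 0 z), g⟫_ℂ‖ ≤ ‖monomial 0 z‖ * ‖toLp f - g‖ := by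
  have hf : ⟪toLp (monomial 0 z), toLp f⟫_ℂ = f z := inner_monomial_zero z f
  rw [← hf, ← inner_sub_right]
  exact norm_inner_le_norm _ _

theorem continuous_norm_monomial (n : ℕ) : Continuous fun p => ‖monomial n p‖ := by
  have hsqrt : (fun p => ‖monomial n p‖) = fun p => √(n ! * Real.exp (‖p‖ ^ 2)) := by
    ext p
    rw [← sq_norm_monomial, Real.sqrt_sq (norm_nonneg _)]
  rw [hsqrt]
  fun_prop

theorem tendstoLocallyUniformly_of_tendsto_toLp {ι : Type*} {l : Filter ι} {f : ι → FockSpace}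
    {g : Lp ℂ 2 gaussMeasure} (hfg : Tendsto (fun i => toLp (f i)) l (𝓝 g)) :
    TendstoLocallyUniformly (fun i => ⇑(f i)) (fun z => ⟪toLp (monomial 0 z), g⟫_ℂ) l :=
  tendstoLocallyUniformly_of_norm_sub_le (continuous_norm_monomial 0)
    (tendsto_iff_norm_sub_tendsto_zero.mp hfg)
    fun i z => norm_sub_inner_monomial_zero_le (f i) g z

/-- An `L²` limit of elements of `F²` is a.e. equal to its pairing with the reproducing kernel,
which is entire as a locally uniform limit. -/
theorem mem_range_toLp_of_tendsto {f : ℕ → FockSpace} {g : Lp ℂ 2 gaussMeasure}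
    (hfg : Tendsto (fun k => toLp (f k)) atTop (𝓝 g)) : g ∈ LinearMap.range toLp := by
  let G : ℂ → ℂ := fun z => ⟪toLp (monomial 0 z), g⟫_ℂ
  have hloc : TendstoLocallyUniformlyOn (fun k => ⇑(f k)) G atTop Set.univ :=
    (tendstoLocallyUniformly_of_tendsto_toLp hfg).tendstoLocallyUniformlyOn
  have hG : Entire G := differentiableOn_univ.mp <|
    hloc.differentiableOn (.of_forall fun k => (f k).memFock.1.differentiableOn) isOpen_univ
  have hae : g =ᵐ[gaussMeasure] G := by
    obtain ⟨ns, hns, hlim⟩ := (tendstoInMeasure_of_tendsto_Lp hfg).exists_seq_tendsto_ae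
    have hf : ∀ᵐ z ∂gaussMeasure, ∀ k, toLp (f k) z = f k z :=
      ae_all_iff.mpr fun k => coeFn_toLp (f k)
    filter_upwards [hlim, hf] with z hz hfz
    simp only [hfz] at hz
    exact tendsto_nhds_unique hz ((hloc.tendsto_at (Set.mem_univ z)).comp hns.tendsto_atTop)
  have hmem : MemFock G := memFock_iff.mpr ⟨hG, (memLp_congr_ae hae).mp (Lp.memLp g)⟩
  exact ⟨⟨G, hmem⟩, Lp.ext ((coeFn_toLp ⟨G, hmem⟩).trans hae.symm)⟩

instance : CompleteSpace FockSpace := by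
  have hisom : Isometry toLp := AddMonoidHomClass.isometry_of_norm toLp fun _ => rfl
  have hclosed : IsClosed (Set.range toLp) := IsSeqClosed.isClosed fun u g hu hug => by
    choose f hf using hu
    exact mem_range_toLp_of_tendsto (f := f) (by simpa only [hf] using hug)
  exact hisom.isUniformInducing.completeSpace hclosed.isComplete

end FockSpace

end Fock

section WeightedComposition

open scoped ComplexConjugate

variable {ψ φ : ℂ → ℂ}

theorem BoundedWCO.entire (h : BoundedWCO ψ φ) : Entire ψ := by
  obtain ⟨C, hC⟩ := h
  have hone : wcomp ψ φ (fockMonomial 0 0) = ψ := by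
    ext z
    simp [wcomp, fockMonomial]
  exact hone ▸ (hC _ (memFock_fockMonomial 0 0)).1.1

/-- `C_{ψ,φ}` as a linear operator on `F²`. -/
def BoundedWCO.toLinearMap (h : BoundedWCO ψ φ) : FockSpace →ₗ[ℂ] FockSpace where
  toFun f := ⟨wcomp ψ φ f, (h.choose_spec f f.memFock).1⟩
  map_add' f g := Subtype.ext <| funext fun z => mul_add (ψ z) (f (φ z)) (g (φ z))
  map_smul' c f := Subtype.ext <| funext fun z => mul_left_comm (ψ z) c (f (φ z))

theorem BoundedWCO.numRange_eq_numericalRange (h : BoundedWCO ψ φ) :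
    numRange ψ φ = numericalRange h.toLinearMap := by
  ext w
  constructor
  · rintro ⟨f, hf, hf1, rfl⟩
    exact ⟨⟨f, hf⟩, FockSpace.norm_eq_one_iff.mpr hf1, FockSpace.inner_eq_fockInner _ _⟩
  · rintro ⟨f, hf, rfl⟩
    exact ⟨f, f.memFock, FockSpace.norm_eq_one_iff.mp hf, FockSpace.inner_eq_fockInner _ _⟩

theorem CompactWCO.isCompactOperator (h : CompactWCO ψ φ) :
    IsCompactOperator h.1.toLinearMap := by
  refine isCompactOperator_of_exists_cauchySeq _ fun f hf => ?_
  obtain ⟨g, hg, hcauchy⟩ := h.2 (fun k => f k) fun k => ⟨(f k).memFock, by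
    rw [← FockSpace.sq_norm_eq_fockNormSq]
    exact pow_le_one₀ (norm_nonneg _) (hf k)⟩
  refine ⟨g, hg, Metric.cauchySeq_iff.mpr fun ε hε => ?_⟩
  obtain ⟨N, hN⟩ := hcauchy (ε ^ 2) (by positivity)
  refine ⟨N, fun i hi j hj => lt_of_pow_lt_pow_left₀ 2 hε.le ?_⟩
  rw [dist_eq_norm, FockSpace.sq_norm_eq_fockNormSq]
  exact hN i hi j hj

theorem CompactWCO.isClosed_numRange (h : CompactWCO ψ φ) (h0 : 0 ∈ numRange ψ φ) :
    IsClosed (numRange ψ φ) := by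
  rw [h.1.numRange_eq_numericalRange] at h0 ⊢
  exact isClosed_numericalRange h.isCompactOperator h0

theorem wcomp_fockMonomial {a b p : ℂ} (hp : a * p + b = p) (n : ℕ) :
    wcomp ψ (fun z => a * z + b) (fockMonomial n p) =
      fun z => (z - p) ^ n * (a ^ n * (ψ z * exp ((a * z + b) * conj p))) := by
  ext z
  have hsub : a * z + b - p = a * (z - p) := by linear_combination hp
  rw [wcomp, fockMonomial, hsub, mul_pow]
  ring

theorem BoundedWCO.fockInner_wcomp_fockMonomial {a b p : ℂ}
    (h : BoundedWCO ψ fun z => a * z + b) (hp : a * p + b = p) (n : ℕ) :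
    fockInner (wcomp ψ (fun z => a * z + b) (fockMonomial n p)) (fockMonomial n p) =
      ψ p * a ^ n * ‖FockSpace.monomial n p‖ ^ 2 := by
  have hmem := (h.choose_spec _ (memFock_fockMonomial n p)).1
  have hk : Entire fun z => a ^ n * (ψ z * exp ((a * z + b) * conj p)) :=
    (h.entire.mul (by fun_prop)).const_mul _
  rw [wcomp_fockMonomial hp] at hmem ⊢
  rw [fockInner_mul_fockMonomial hk hmem, ← ofReal_pow, FockSpace.sq_norm_monomial, hp, mul_conj']
  push_cast
  ring

theorem BoundedWCO.mul_pow_mem_numRange {a b p : ℂ} (h : BoundedWCO ψ fun z => a * z + b)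
    (hp : a * p + b = p) (n : ℕ) : ψ p * a ^ n ∈ numRange ψ fun z => a * z + b := by
  have hne : (‖FockSpace.monomial n p‖ : ℂ) ≠ 0 := by
    exact_mod_cast norm_ne_zero_iff.mpr (FockSpace.monomial_ne_zero n p)
  rw [h.numRange_eq_numericalRange]
  convert inner_div_norm_sq_mem_numericalRange h.toLinearMap (FockSpace.monomial_ne_zero n p)
    using 1
  rw [FockSpace.inner_eq_fockInner, ofReal_pow, eq_div_iff (pow_ne_zero 2 hne)]
  exact (h.fockInner_wcomp_fockMonomial hp n).symm

theorem BoundedWCO.zero_mem_numRange {a b : ℂ} (ha : ∀ t : ℝ, 0 < t → a ≠ t)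
    (h : BoundedWCO ψ fun z => a * z + b) : 0 ∈ numRange ψ fun z => a * z + b := by
  have ha1 : 1 - a ≠ 0 := sub_ne_zero.mpr (by simpa using (ha 1 one_pos).symm)
  have hp : a * (b / (1 - a)) + b = b / (1 - a) := by
    field_simp
    ring
  refine zero_mem_of_convex_of_mul_pow_mem ?_ ha (h.mul_pow_mem_numRange hp)
  rw [h.numRange_eq_numericalRange]
  exact convex_numericalRange _

end WeightedComposition

theorem zero_mem_numRange_compact_general {a b : ℂ} (ha : ∀ t : ℝ, 0 < t → a ≠ t) {ψ : ℂ → ℂ}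
    (h : CompactWCO ψ fun z => a * z + b) :
    0 ∈ numRange ψ (fun z => a * z + b) ∧ IsClosed (numRange ψ fun z => a * z + b) :=
  have h0 := h.1.zero_mem_numRange ha
  ⟨h0, h.isClosed_numRange h0⟩

/-- Theorem 2.2: if `C_{ψ,φ}` is compact on `F²`, `φ(z)=az+b` with `0<|a|<1`, `a` not a
positive real number, and `ψ(b/(1-a)) ≠ 0`, then `0 ∈ W(C_{ψ,φ})` and `W(C_{ψ,φ})` is
closed. -/
theorem zero_mem_numRange_compact
    (a b : ℂ) (ha0 : 0 < ‖a‖) (ha1 : ‖a‖ < 1)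
    (hapos : ∀ t : ℝ, 0 < t → a ≠ (t : ℂ))
    (ψ : ℂ → ℂ) (hψ : Entire ψ) (hψp : ψ (b / (1 - a)) ≠ 0)
    (φ : ℂ → ℂ) (hφ : φ = fun z => a * z + b)
    (hcpt : CompactWCO ψ φ) :
    (0 : ℂ) ∈ numRange ψ φ ∧ IsClosed (numRange ψ φ) := by
  subst hφ
  exact zero_mem_numRange_compact_general hapos hcpt
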